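/- arXiv:1210.1559 — 2 statements merged into one kernel-verified Lean document; each statement's English description precedes it below -/
import Mathlib

section
/- Let R be a commutative ring, n ≥ 1, and let L be a lattice in R((u))^n. Then L is a finite locally free R[[u]]-module of rank n, i.e., L is a finitely generated projective R[[u]]-module whose localization at every prime ideal of R[[u]] is free of rank n. -/
noncomputable section
namespace Pap

variable (R : Type*) [CommRing R]

/-- `u^m` as a Laurent series. -/
def U (m : ℤ) : LaurentSeries R := HahnSeries.single m 1

/-- `R[[u]]` as a `R[[u]]`-submodule of `R((u))`. -/
def psRange : Submodule (PowerSeries R) (LaurentSeries R) :=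
  LinearMap.range (Algebra.linearMap (PowerSeries R) (LaurentSeries R))

variable (n : ℕ)

/-- `R((u))^n`. -/
abbrev V := Fin n → LaurentSeries R

instance (priority := 10000) : AddCommGroup (V R n) := Pi.addCommGroup
instance (priority := 10000) : Module (PowerSeries R) (V R n) := Pi.module _ _ _
instance (priority := 10000) : Module (LaurentSeries R) (V R n) := Pi.module _ _ _

/-- Multiplication by a Laurent series, as an `R[[u]]`-linear endomorphism of `R((u))^n`. -/
def smulV (a : LaurentSeries R) : V R n →ₗ[PowerSeries R] V R n where
  toFun x := a • x
  map_add' x y := smul_add a x y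
  map_smul' c x := by
    funext i
    simp only [Pi.smul_apply, RingHom.id_apply, smul_eq_mul, Algebra.smul_def]
    exact mul_left_comm _ _ _

/-- Image of a submodule under multiplication by a Laurent series. -/
def scaleL (a : LaurentSeries R) (L : Submodule (PowerSeries R) (V R n)) :
    Submodule (PowerSeries R) (V R n) := L.map (smulV R n a)

/-- The standard lattice `R[[u]]^n`. -/
def stdLat : Submodule (PowerSeries R) (V R n) := Submodule.pi Set.univ fun _ => psRange R

/-- The quotient `B/(A ∩ B)`; for `A ≤ B` this is `B/A`. -/
abbrev subQuot (A B : Submodule (PowerSeries R) (V R n)) :=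
  B ⧸ (A.comap B.subtype)

/-- A lattice in `R((u))^n`. -/
def IsLattice (L : Submodule (PowerSeries R) (V R n)) : Prop :=
  ∃ N : ℕ, scaleL R n (U R N) (stdLat R n) ≤ L ∧ L ≤ scaleL R n (U R (-(N : ℤ))) (stdLat R n) ∧
    Module.Finite R (RestrictScalars R (PowerSeries R)
      (subQuot R n L (scaleL R n (U R (-(N : ℤ))) (stdLat R n)))) ∧
    Module.Projective R (RestrictScalars R (PowerSeries R)
      (subQuot R n L (scaleL R n (U R (-(N : ℤ))) (stdLat R n))))

end Pap
end

/-
A free module `M = u⁻ᴺ R[[u]]ⁿ` surjects onto the quotient `Q = M / L`, and `u` acts nilpotently on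
`Q`. The characteristic sequence `0 → R[[u]] ⊗ Q → R[[u]] ⊗ Q → Q → 0`, whose first map is
`u ⊗ 1 - 1 ⊗ u`, is then exact. Since `Q` is finite projective over `R`, this is a second
presentation of `Q` by finite projective `R[[u]]`-modules, and Schanuel's lemma compares the two:
`L ⊕ (R[[u]] ⊗ Q) ≃ (R[[u]] ⊗ Q) ⊕ M`. Hence `L` is finite projective, of the same rank as `M`.
-/

namespace Pap

open TensorProduct nonZeroDivisors

section Schanuel

variable {A M P Q : Type*} [Ring A] [AddCommGroup M] [AddCommGroup P] [AddCommGroup Q]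
  [Module A M] [Module A P] [Module A Q] {f : M →ₗ[A] Q} {g : P →ₗ[A] Q}

/-- The isomorphism of Schanuel's lemma, built from lifts `s` and `t` of the two presentations
`f` and `g` through each other. -/
def schanuelEquiv (s : M →ₗ[A] P) (t : P →ₗ[A] M) (hs : g ∘ₗ s = f) (ht : f ∘ₗ t = g) :
    (LinearMap.ker f × P) ≃ₗ[A] LinearMap.ker g × M where
  toFun x := (⟨x.2 - s (x.1 + t x.2), by
    have hsf (m : M) : g (s m) = f m := LinearMap.congr_fun hs m
    have htg (p : P) : f (t p) = g p := LinearMap.congr_fun ht p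
    simp [hsf, htg]⟩, x.1 + t x.2)
  invFun y := (⟨y.2 - t (y.1 + s y.2), by
    have hsf (m : M) : g (s m) = f m := LinearMap.congr_fun hs m
    have htg (p : P) : f (t p) = g p := LinearMap.congr_fun ht p
    simp [hsf, htg]⟩, y.1 + s y.2)
  map_add' x y := by ext <;> simp <;> abel
  map_smul' a x := by ext <;> simp [smul_sub]
  left_inv x := by ext <;> simp
  right_inv y := by ext <;> simp

theorem nonempty_ker_prod_equiv_ker_prod [Module.Projective A M] [Module.Projective A P]
    (hf : Function.Surjective f) (hg : Function.Surjective g) :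
    Nonempty ((LinearMap.ker f × P) ≃ₗ[A] LinearMap.ker g × M) := by
  obtain ⟨s, hs⟩ := Module.projective_lifting_property g f hg
  obtain ⟨t, ht⟩ := Module.projective_lifting_property f g hf
  exact ⟨schanuelEquiv s t hs ht⟩

end Schanuel

section StableIsomorphism

theorem finite_of_prod_equiv {A K P N : Type*} [Semiring A] [AddCommMonoid K] [AddCommMonoid P]
    [AddCommMonoid N] [Module A K] [Module A P] [Module A N] [Module.Finite A N]
    (e : (K × P) ≃ₗ[A] N) : Module.Finite A K :=
  .of_surjective (LinearMap.fst A K P ∘ₗ e.symm.toLinearMap)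
    (Prod.fst_surjective.comp e.symm.surjective)

theorem projective_of_prod_equiv {A K P N : Type*} [Semiring A] [AddCommMonoid K] [AddCommMonoid P]
    [AddCommMonoid N] [Module A K] [Module A P] [Module A N] [Module.Projective A N]
    (e : (K × P) ≃ₗ[A] N) : Module.Projective A K :=
  .of_split (e.toLinearMap ∘ₗ LinearMap.inl A K P) (LinearMap.fst A K P ∘ₗ e.symm.toLinearMap)
    (by ext; simp)

theorem rankAtStalk_eq_of_prod_equiv {A K P M : Type*} [CommRing A] [AddCommGroup K]
    [AddCommGroup P] [AddCommGroup M] [Module A K] [Module A P] [Module A M]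
    [Module.Finite A K] [Module.Flat A K] [Module.Finite A P] [Module.Flat A P]
    [Module.Finite A M] [Module.Flat A M] (e : (K × P) ≃ₗ[A] P × M) :
    Module.rankAtStalk (R := A) K = Module.rankAtStalk M := by
  have h := Module.rankAtStalk_eq_of_equiv e
  rwa [Module.rankAtStalk_prod, Module.rankAtStalk_prod, add_comm, add_left_cancel_iff] at h

end StableIsomorphism

section Intertwining

variable {R A Q C : Type*} [CommRing R] [CommRing A] [Algebra R A]
  [AddCommGroup Q] [Module R Q] [Module A Q] [IsScalarTower R A Q]
  [AddCommGroup C] [Module R C] [Module A C] [IsScalarTower R A C] {t : A} {ψ : Q →ₗ[R] C}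

theorem map_aeval_smul_of_map_smul (hψ : ∀ q, ψ (t • q) = t • ψ q) (p : Polynomial R) (q : Q) :
    ψ (Polynomial.aeval t p • q) = Polynomial.aeval t p • ψ q := by
  induction p using Polynomial.induction_on generalizing q with
  | C r => simp
  | add p₁ p₂ h₁ h₂ => simp only [map_add, add_smul, h₁, h₂]
  | monomial n r h => rw [pow_succ, ← mul_assoc, map_mul, Polynomial.aeval_X, mul_smul, h, hψ,
      mul_smul]

theorem map_smul_of_map_smul_of_pow_smul_eq_zero {k : ℕ}
    (hA : ∀ a : A, ∃ p : Polynomial R, t ^ k ∣ a - Polynomial.aeval t p)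
    (hQ : ∀ q : Q, t ^ k • q = 0) (hC : ∀ c : C, t ^ k • c = 0)
    (hψ : ∀ q, ψ (t • q) = t • ψ q) (a : A) (q : Q) : ψ (a • q) = a • ψ q := by
  obtain ⟨p, b, hb⟩ := hA a
  rw [sub_eq_iff_eq_add'.mp hb]
  simp only [add_smul, map_add, map_aeval_smul_of_map_smul hψ, mul_comm _ b, mul_smul, hQ, hC,
    smul_zero, map_zero]

end Intertwining

section CharacteristicSequence

theorem exists_mul_sub_eq_pow {B : Type*} [Ring B] {x y : B} {k : ℕ} (hxy : Commute x y)
    (hy : y ^ k = 0) : ∃ s, s * (x - y) = x ^ k ∧ (x - y) * s = x ^ k :=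
  ⟨∑ i ∈ Finset.range k, x ^ i * y ^ (k - 1 - i), by rw [hxy.geom_sum₂_mul, hy, sub_zero],
    by rw [hxy.mul_geom_sum₂, hy, sub_zero]⟩

variable (R : Type*) {A : Type*} (Q : Type*) [CommRing R] [CommRing A] [Algebra R A]
  [AddCommGroup Q] [Module R Q] [Module A Q] [IsScalarTower R A Q]

/-- The characteristic endomorphism `t ⊗ 1 - 1 ⊗ t` of `A ⊗[R] Q`. -/
def charMap (t : A) : A ⊗[R] Q →ₗ[A] A ⊗[R] Q :=
  t • LinearMap.id - (Algebra.lsmul R R Q t).baseChange A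

variable (A) in
/-- The action `a ⊗ q ↦ a • q` of `A` on `Q`, as a map on `A ⊗[R] Q`; it is the augmentation of the
characteristic sequence. -/
def actionMap : A ⊗[R] Q →ₗ[A] Q :=
  (LinearMap.id : Q →ₗ[R] Q).liftBaseChange A

variable {R Q}

@[simp]
theorem charMap_tmul (t a : A) (q : Q) :
    charMap R Q t (a ⊗ₜ q) = (t * a) ⊗ₜ q - a ⊗ₜ (t • q) := by
  simp [charMap, TensorProduct.smul_tmul']

@[simp]
theorem actionMap_tmul (a : A) (q : Q) : actionMap R A Q (a ⊗ₜ q) = a • q := by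
  simp [actionMap]

theorem actionMap_surjective : Function.Surjective (actionMap R A Q) :=
  fun q ↦ ⟨1 ⊗ₜ q, by simp⟩

theorem actionMap_comp_charMap (t : A) : actionMap R A Q ∘ₗ charMap R Q t = 0 := by
  ext q
  simp

variable {t : A} {k : ℕ}

theorem exists_charMap_mul_eq_pow (hQ : ∀ q : Q, t ^ k • q = 0) :
    ∃ S : Module.End A (A ⊗[R] Q),
      S * charMap R Q t = t ^ k • 1 ∧ charMap R Q t * S = t ^ k • 1 := by
  set x : Module.End A (A ⊗[R] Q) := t • 1 with hx
  set y : Module.End A (A ⊗[R] Q) := (Algebra.lsmul R R Q t).baseChange A with hy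
  have hxy : Commute x y := (Commute.one_left y).smul_left t
  have hxk : x ^ k = t ^ k • 1 := by rw [hx, smul_pow, one_pow]
  have hyk : y ^ k = 0 := by
    have h : Algebra.lsmul R R Q t ^ k = 0 := by
      ext q
      simp [← map_pow, hQ]
    rw [hy, ← LinearMap.baseChange_pow, h, LinearMap.baseChange_zero]
  rw [← hxk]
  exact exists_mul_sub_eq_pow (B := Module.End A (A ⊗[R] Q)) hxy hyk

theorem charMap_injective [Module.Flat R Q] (ht : t ∈ A⁰) (hQ : ∀ q : Q, t ^ k • q = 0) :
    Function.Injective (charMap R Q t) := by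
  obtain ⟨S, hS, -⟩ := exists_charMap_mul_eq_pow (R := R) hQ
  have hreg : Function.Injective (S ∘ charMap R Q t) := by
    rw [← Module.End.coe_mul, hS]
    exact Module.Flat.isSMulRegular_of_nonZeroDivisors (M := A ⊗[R] Q) (pow_mem ht k)
  exact hreg.of_comp

theorem ker_actionMap (hA : ∀ a : A, ∃ p : Polynomial R, t ^ k ∣ a - Polynomial.aeval t p)
    (hQ : ∀ q : Q, t ^ k • q = 0) :
    LinearMap.ker (actionMap R A Q) = LinearMap.range (charMap R Q t) := by
  refine le_antisymm (fun z hz ↦ ?_)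
    (LinearMap.range_le_ker_iff.mpr (actionMap_comp_charMap t))
  set π := (LinearMap.range (charMap R Q t)).mkQ
  -- On the cokernel of `charMap` the two actions of `t` agree, so `q ↦ 1 ⊗ q` becomes `A`-linear
  -- there and is inverse to the map induced by `actionMap`.
  let ψ : Q →ₗ[R] (A ⊗[R] Q) ⧸ LinearMap.range (charMap R Q t) :=
    π.restrictScalars R ∘ₗ TensorProduct.mk R A Q 1
  have hψt (q : Q) : ψ (t • q) = t • ψ q := by
    have h : t • (1 : A) ⊗ₜ[R] q - 1 ⊗ₜ (t • q) ∈ LinearMap.range (charMap R Q t) :=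
      ⟨1 ⊗ₜ q, by simp [TensorProduct.smul_tmul']⟩
    exact ((Submodule.Quotient.eq _).mpr h).symm
  have hcoker (c : (A ⊗[R] Q) ⧸ LinearMap.range (charMap R Q t)) : t ^ k • c = 0 := by
    obtain ⟨S, -, hS⟩ := exists_charMap_mul_eq_pow (R := R) hQ
    obtain ⟨z, rfl⟩ := Submodule.mkQ_surjective _ c
    rw [← map_smul, ← LinearMap.mem_ker, Submodule.ker_mkQ]
    exact ⟨S z, LinearMap.congr_fun hS z⟩
  let ψA : Q →ₗ[A] (A ⊗[R] Q) ⧸ LinearMap.range (charMap R Q t) :=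
    { ψ with map_smul' := map_smul_of_map_smul_of_pow_smul_eq_zero hA hQ hcoker hψt }
  have hπ : π = ψA ∘ₗ actionMap R A Q := by
    ext q
    simp [ψA, ψ]
  rw [← Submodule.ker_mkQ (LinearMap.range _), LinearMap.mem_ker]
  change π z = 0
  rw [hπ, LinearMap.comp_apply, hz, map_zero]

theorem nonempty_ker_prod_equiv {M : Type*} [AddCommGroup M] [Module A M] [Module.Projective A M]
    [Module.Projective R Q] (ht : t ∈ A⁰)
    (hA : ∀ a : A, ∃ p : Polynomial R, t ^ k ∣ a - Polynomial.aeval t p)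
    (hQ : ∀ q : Q, t ^ k • q = 0) {f : M →ₗ[A] Q} (hf : Function.Surjective f) :
    Nonempty ((LinearMap.ker f × A ⊗[R] Q) ≃ₗ[A] (A ⊗[R] Q) × M) := by
  obtain ⟨e⟩ := nonempty_ker_prod_equiv_ker_prod hf (actionMap_surjective (R := R))
  let e' : LinearMap.ker (actionMap R A Q) ≃ₗ[A] A ⊗[R] Q :=
    (LinearEquiv.ofEq _ _ (ker_actionMap hA hQ)).trans
      (LinearEquiv.ofInjective _ (charMap_injective ht hQ)).symm
  exact ⟨e.trans (e'.prodCongr (.refl A M))⟩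

theorem finite_and_projective_and_rankAtStalk_ker_eq {M : Type*} [AddCommGroup M] [Module A M]
    [Module.Finite A M] [Module.Projective A M] [Module.Finite R Q] [Module.Projective R Q]
    (ht : t ∈ A⁰) (hA : ∀ a : A, ∃ p : Polynomial R, t ^ k ∣ a - Polynomial.aeval t p)
    (hQ : ∀ q : Q, t ^ k • q = 0) {f : M →ₗ[A] Q} (hf : Function.Surjective f) :
    Module.Finite A (LinearMap.ker f) ∧ Module.Projective A (LinearMap.ker f) ∧
      Module.rankAtStalk (R := A) (LinearMap.ker f) = Module.rankAtStalk M := by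
  obtain ⟨e⟩ := nonempty_ker_prod_equiv ht hA hQ hf
  have hfin := finite_of_prod_equiv e
  have hproj := projective_of_prod_equiv e
  exact ⟨hfin, hproj, rankAtStalk_eq_of_prod_equiv e⟩

theorem finite_and_projective_and_rankAtStalk_eq_of_le {V : Type*} [AddCommGroup V] [Module A V]
    {L M : Submodule A V} (hLM : L ≤ M) [Module.Finite A M] [Module.Projective A M]
    [Module R (M ⧸ L.comap M.subtype)] [IsScalarTower R A (M ⧸ L.comap M.subtype)]
    [Module.Finite R (M ⧸ L.comap M.subtype)] [Module.Projective R (M ⧸ L.comap M.subtype)]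
    (ht : t ∈ A⁰) (hA : ∀ a : A, ∃ p : Polynomial R, t ^ k ∣ a - Polynomial.aeval t p)
    (hQ : ∀ q : M ⧸ L.comap M.subtype, t ^ k • q = 0) :
    Module.Finite A L ∧ Module.Projective A L ∧
      Module.rankAtStalk (R := A) L = Module.rankAtStalk M := by
  obtain ⟨hfin, hproj, hrank⟩ := finite_and_projective_and_rankAtStalk_ker_eq (R := R) ht hA hQ
    (Submodule.mkQ_surjective _)
  let e : LinearMap.ker (L.comap M.subtype).mkQ ≃ₗ[A] L :=
    (LinearEquiv.ofEq _ _ (Submodule.ker_mkQ _)).trans (Submodule.comapSubtypeEquivOfLe hLM)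
  exact ⟨.equiv e, .of_equiv e, (Module.rankAtStalk_eq_of_equiv e).symm.trans hrank⟩

end CharacteristicSequence

section LaurentSeries

open PowerSeries

variable {R : Type*} [CommRing R] {n : ℕ}

theorem U_mul_U (a b : ℤ) : U R a * U R b = U R (a + b) := by
  simp [U]

theorem X_pow_dvd_sub_aeval_trunc (k : ℕ) (a : R⟦X⟧) :
    X ^ k ∣ a - Polynomial.aeval X (trunc k a) := by
  have h : Polynomial.aeval X (trunc k a) = (trunc k a : R⟦X⟧) := Polynomial.eval₂_C_X_eq_coe
  rw [h]
  exact ⟨_, sub_eq_of_eq_add (eq_X_pow_mul_shift_add_trunc k a)⟩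

theorem X_pow_smul_eq_U_smul (k : ℕ) (v : V R n) : (X ^ k : R⟦X⟧) • v = U R k • v := by
  ext1 i
  simp [U, Algebra.smul_def, LaurentSeries.coe_algebraMap, HahnSeries.ofPowerSeries_X_pow]

theorem smulV_U_injective (m : ℤ) : Function.Injective (smulV R n (U R m)) := by
  have h : Function.LeftInverse (smulV R n (U R (-m))) (smulV R n (U R m)) := fun v ↦ by
    change U R (-m) • U R m • v = v
    rw [smul_smul, U_mul_U, neg_add_cancel]
    exact one_smul _ v
  exact h.injective

variable (R n) in
/-- The coordinate isomorphism `R[[u]]^n ≃ u^m R[[u]]^n`. -/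
noncomputable def scaleLStdLatEquiv (m : ℤ) :
    (Fin n → R⟦X⟧) ≃ₗ[R⟦X⟧] scaleL R n (U R m) (stdLat R n) :=
  let φ := (Algebra.linearMap R⟦X⟧ (LaurentSeries R)).compLeft (Fin n)
  have hφ : Function.Injective φ := HahnSeries.ofPowerSeries_injective.comp_left
  (LinearEquiv.ofInjective φ hφ).trans <|
    (LinearEquiv.ofEq _ _ (LinearMap.range_compLeft _ _)).trans <|
      Submodule.equivMapOfInjective _ (smulV_U_injective m) (stdLat R n)

theorem X_pow_smul_mem_scaleL {L : Submodule R⟦X⟧ (V R n)} {m : ℤ} {v : V R n}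
    (hv : v ∈ scaleL R n (U R m) L) (k : ℕ) :
    (X ^ k : R⟦X⟧) • v ∈ scaleL R n (U R (k + m)) L := by
  obtain ⟨w, hw, rfl⟩ := hv
  refine ⟨w, hw, ?_⟩
  change U R (k + m) • w = (X ^ k : R⟦X⟧) • U R m • w
  rw [X_pow_smul_eq_U_smul, smul_smul, U_mul_U]

theorem X_pow_smul_subQuot_eq_zero {L L₀ : Submodule R⟦X⟧ (V R n)} {N : ℕ}
    (hL : scaleL R n (U R N) L₀ ≤ L)
    (q : subQuot R n L (scaleL R n (U R (-(N : ℤ))) L₀)) :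
    (X ^ (N + N) : R⟦X⟧) • q = 0 := by
  obtain ⟨v, rfl⟩ := Submodule.mkQ_surjective _ q
  rw [← map_smul, ← LinearMap.mem_ker, Submodule.ker_mkQ]
  have h := X_pow_smul_mem_scaleL v.2 (N + N)
  rw [Nat.cast_add, add_neg_cancel_right] at h
  exact hL h

theorem rankAtStalk_scaleL_stdLat (m : ℤ) (p : PrimeSpectrum R⟦X⟧) :
    Module.rankAtStalk (R := R⟦X⟧) (scaleL R n (U R m) (stdLat R n)) p = n := by
  have := p.nontrivial
  simp [Module.rankAtStalk_eq_of_equiv (scaleLStdLatEquiv R n m).symm]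

theorem IsLattice.finite_and_projective_and_rankAtStalk_eq {L : Submodule R⟦X⟧ (V R n)}
    (hL : IsLattice R n L) : Module.Finite R⟦X⟧ L ∧ Module.Projective R⟦X⟧ L ∧
      ∀ p, Module.rankAtStalk (R := R⟦X⟧) L p = n := by
  obtain ⟨N, hNL, hLN, hfinQ, hprojQ⟩ := hL
  let M := scaleL R n (U R (-(N : ℤ))) (stdLat R n)
  let Q := subQuot R n L M
  let : Module R Q := Module.restrictScalars R R⟦X⟧ Q
  have : IsScalarTower R R⟦X⟧ Q := .restrictScalars R R⟦X⟧ Q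
  have : Module.Finite R Q := hfinQ
  have : Module.Projective R Q := hprojQ
  have : Module.Finite R⟦X⟧ M := .equiv (scaleLStdLatEquiv R n (-N))
  have : Module.Projective R⟦X⟧ M := .of_equiv (scaleLStdLatEquiv R n (-N))
  obtain ⟨hfin, hproj, hrank⟩ := finite_and_projective_and_rankAtStalk_eq_of_le (R := R) hLN
    MvPowerSeries.X_mem_nonzeroDivisors (fun a ↦ ⟨_, X_pow_dvd_sub_aeval_trunc _ a⟩)
    (X_pow_smul_subQuot_eq_zero hNL)
  exact ⟨hfin, hproj, fun p ↦ by rw [hrank, rankAtStalk_scaleL_stdLat]⟩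

end LaurentSeries

end Pap

open Pap in
/-- A lattice in `R((u))^n` is a finite locally free `R[[u]]`-module of rank `n`. -/
theorem stmt4 (R : Type*) [CommRing R] (n : ℕ) (hn : 1 ≤ n)
    (L : Submodule (PowerSeries R) (V R n)) (hL : IsLattice R n L) :
    Module.Finite (PowerSeries R) L ∧ Module.Projective (PowerSeries R) L ∧
      ∀ (P : Ideal (PowerSeries R)) [P.IsPrime],
        Module.Free (Localization P.primeCompl) (LocalizedModule P.primeCompl L) ∧
        Module.finrank (Localization P.primeCompl) (LocalizedModule P.primeCompl L) = n := by
  obtain ⟨hfin, hproj, hrank⟩ := hL.finite_and_projective_and_rankAtStalk_eq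
  refine ⟨hfin, hproj, fun P hP ↦ ⟨?_, hrank ⟨P, hP⟩⟩⟩
  have hfree : (⟨P, hP⟩ : PrimeSpectrum (PowerSeries R)) ∈
      Module.freeLocus (PowerSeries R) L :=
    Module.freeLocus_eq_univ (R := PowerSeries R) (M := L) ▸ Set.mem_univ _
  exact hfree
end

section
/- Let F be a field, n ≥ 1, w ∈ S_n and λ ∈ ℤ^n, and set x = A_w·u^λ ∈ GL_n(F((u))). Assume x·Λ̃_j ⊆ Λ̃_j for all j ∈ ℤ. Then for every i ∈ {1,…,n}: Λ̃_i = x·Λ̃_i + Λ̃_{i-1} if and only if w(i) = i and λ(i) = 0. -/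
noncomputable section
namespace Pap

variable (R : Type*) [CommRing R]

variable (n : ℕ)

/-- Exponent of `u` governing the `t`-th coordinate of the `j`-th standard lattice:
for `j = nk + i` with `0 ≤ i < n` it equals `k+1` for `t+1 ≤ i` and `k` otherwise. -/
def dex (j : ℤ) (t : Fin n) : ℤ := (j - ((t : ℤ) + 1)) / n + 1

/-- The standard lattice chain `Λ̃_j`, `j ∈ ℤ`: the `R[[u]]`-submodule with basis
`u^{-1}e_1, …, u^{-1}e_i, e_{i+1}, …, e_n` for `0 ≤ j = i < n`, extended by
`Λ̃_{nk+i} = u^{-k}·Λ̃_i`. -/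
def stdChain (j : ℤ) : Submodule (PowerSeries R) (V R n) :=
  Submodule.span (PowerSeries R)
    (Set.range fun t : Fin n =>
      (fun s => if s = t then U R (-(dex n j t)) else 0 : V R n))

/-- The image of an `R[[u]]`-submodule of `R((u))^n` under a matrix over `R((u))`. -/
def matLat (x : Matrix (Fin n) (Fin n) (LaurentSeries R))
    (L : Submodule (PowerSeries R) (V R n)) : Submodule (PowerSeries R) (V R n) :=
  L.map ((Matrix.mulVecLin x).restrictScalars (PowerSeries R))

/-- The permutation matrix `A_w`. -/
def permMatrix (w : Equiv.Perm (Fin n)) : Matrix (Fin n) (Fin n) (LaurentSeries R) :=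
  Matrix.of fun i j => if i = w j then 1 else 0

/-- The matrix `A_w · u^λ`. -/
def xMat (w : Equiv.Perm (Fin n)) (lam : Fin n → ℤ) :
    Matrix (Fin n) (Fin n) (LaurentSeries R) :=
  permMatrix R n w * Matrix.diagonal fun t => U R (lam t)

end Pap
end

/-!
All the submodules involved are spanned by vectors `u^{d(t)} e_t`, so they are determined by their
exponents `d ∈ ℤ^n`. In these terms inclusion reverses `≤`, sums become pointwise minima,
`A_w u^λ` turns `d` into `(λ + d) ∘ w⁻¹`, and passing from `Λ̃_{i-1}` to `Λ̃_i` lowers the `i`-th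
exponent by one. If `A_w u^λ` stabilizes the lattice with exponents `d`, so that
`d ≤ (λ + d) ∘ w⁻¹`, then the exponent `d(i) - 1` can only be attained on the right-hand side by
the vector that `A_w u^λ` produces from the lowered coordinate `i` itself, which forces
`w(i) = i` and `λ(i) = 0`.
-/

namespace Pap

open scoped PowerSeries

variable {R : Type*} [CommRing R]

theorem X_pow_smul_U (k : ℕ) (a : ℤ) : (PowerSeries.X ^ k : R⟦X⟧) • U R a = U R (a + k) := by
  rw [Algebra.smul_def, LaurentSeries.coe_algebraMap, HahnSeries.ofPowerSeries_X_pow, U, U,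
    HahnSeries.single_mul_single, one_mul, add_comm a]

theorem orderTop_le_orderTop_smul (p : R⟦X⟧) (f : LaurentSeries R) :
    f.orderTop ≤ (p • f).orderTop := by
  have hp : 0 ≤ (HahnSeries.ofPowerSeries ℤ R p).orderTop := by
    refine HahnSeries.le_orderTop_iff_forall.2 fun m hm => ?_
    rw [PowerSeries.coeff_coe, if_pos (by exact_mod_cast hm)]
  rw [Algebra.smul_def, LaurentSeries.coe_algebraMap]
  exact (le_add_of_nonneg_left hp).trans HahnSeries.orderTop_add_le_mul

section CoordLattice

variable {ι : Type*} [DecidableEq ι]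

variable (R) in
/-- The `R[[u]]`-submodule of `R((u))^ι` spanned by the vectors `u^{d(t)} e_t`. The members of the
standard chain, their sums, and their images under `A_w u^λ` are all of this form. -/
noncomputable def coordLattice (d : ι → ℤ) : Submodule R⟦X⟧ (ι → LaurentSeries R) :=
  Submodule.span R⟦X⟧ (Set.range fun t => Pi.single t (U R (d t)))

theorem single_U_mem_coordLattice {d : ι → ℤ} {t : ι} {a : ℤ} (h : d t ≤ a) :
    Pi.single t (U R a) ∈ coordLattice R d := by
  obtain ⟨k, rfl⟩ := Int.le.dest h
  rw [← X_pow_smul_U, Pi.single_smul]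
  exact Submodule.smul_mem _ _ (Submodule.subset_span ⟨t, rfl⟩)

theorem le_orderTop_of_mem_coordLattice {d : ι → ℤ} {v : ι → LaurentSeries R}
    (hv : v ∈ coordLattice R d) (s : ι) : d s ≤ (v s).orderTop := by
  induction hv using Submodule.span_induction with
  | mem x hx =>
    obtain ⟨t, rfl⟩ := hx
    obtain rfl | hst := eq_or_ne s t
    · simp only [Pi.single_eq_same]
      exact HahnSeries.orderTop_single_le
    · simp [hst]
  | zero => simp
  | add x y _ _ hx hy => exact (le_min hx hy).trans HahnSeries.min_orderTop_le_orderTop_add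
  | smul p x _ hx => exact hx.trans (orderTop_le_orderTop_smul p (x s))

theorem antitone_coordLattice : Antitone (coordLattice R : (ι → ℤ) → _) := by
  refine fun d e hde => Submodule.span_le.2 ?_
  rintro _ ⟨t, rfl⟩
  exact single_U_mem_coordLattice (hde t)

theorem coordLattice_sup (d e : ι → ℤ) :
    coordLattice R d ⊔ coordLattice R e = coordLattice R (d ⊓ e) := by
  refine le_antisymm
    (sup_le (antitone_coordLattice inf_le_left) (antitone_coordLattice inf_le_right))
    (Submodule.span_le.2 ?_)
  rintro _ ⟨t, rfl⟩
  rcases inf_le_iff.1 (le_refl (d t ⊓ e t)) with h | h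
  · exact Submodule.mem_sup_left (single_U_mem_coordLattice h)
  · exact Submodule.mem_sup_right (single_U_mem_coordLattice h)

theorem coordLattice_le_iff [Nontrivial R] {d e : ι → ℤ} :
    coordLattice R d ≤ coordLattice R e ↔ e ≤ d := by
  refine ⟨fun h t => ?_, fun h => antitone_coordLattice h⟩
  have ht := le_orderTop_of_mem_coordLattice (h (single_U_mem_coordLattice (le_refl (d t)))) t
  rw [Pi.single_eq_same, U, HahnSeries.orderTop_single one_ne_zero] at ht
  exact_mod_cast ht

theorem coordLattice_inj [Nontrivial R] {d e : ι → ℤ} :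
    coordLattice R d = coordLattice R e ↔ d = e := by
  simp only [le_antisymm_iff, coordLattice_le_iff, and_comm]

end CoordLattice

theorem sub_single_eq_sub_single_inf_iff {ι : Type*} [DecidableEq ι] {d e : ι → ℤ} (hde : d ≤ e)
    (i k : ι) :
    d - Pi.single i 1 = (e - Pi.single k 1) ⊓ d ↔ k = i ∧ e k = d k := by
  constructor
  · intro h
    have hi : d i - 1 = min (e i - (Pi.single k 1 : ι → ℤ) i) (d i) := by
      simpa using congrFun h i
    have hdi := hde i
    obtain rfl | hik := eq_or_ne k i
    · rw [Pi.single_eq_same] at hi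
      exact ⟨rfl, by lia⟩
    · rw [Pi.single_eq_of_ne' hik] at hi
      lia
  · rintro ⟨rfl, hk⟩
    ext s
    obtain rfl | hs := eq_or_ne s k
    · simp [hk]
    · simpa [hs] using hde s

variable {n : ℕ}

theorem xMat_mulVec_single (w : Equiv.Perm (Fin n)) (lam : Fin n → ℤ) (t : Fin n) (a : ℤ) :
    (xMat R n w lam).mulVec (Pi.single t (U R a)) = Pi.single (w t) (U R (lam t + a)) := by
  ext1 s
  simp [xMat, permMatrix, Matrix.mul_diagonal, Pi.single_apply, U]

theorem matLat_xMat_coordLattice (w : Equiv.Perm (Fin n)) (lam d : Fin n → ℤ) :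
    matLat R n (xMat R n w lam) (coordLattice R d) =
      coordLattice R ((lam + d) ∘ w.symm) := by
  have himage (t : Fin n) : (xMat R n w lam).mulVec (Pi.single t (U R (d t))) =
      Pi.single (w t) (U R (((lam + d) ∘ w.symm) (w t))) := by
    rw [xMat_mulVec_single, Function.comp_apply, w.symm_apply_apply, Pi.add_apply]
  have hrange := w.surjective.range_comp fun s =>
    (Pi.single s (U R (((lam + d) ∘ w.symm) s)) : Fin n → LaurentSeries R)
  rw [matLat, coordLattice, Submodule.map_span, ← Set.range_comp, coordLattice, ← hrange]
  exact congrArg (fun g => Submodule.span R⟦X⟧ (Set.range g)) (funext himage)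

theorem stdChain_eq_coordLattice (j : ℤ) : stdChain R n j = coordLattice R (-dex n j) := by
  rw [stdChain, coordLattice]
  congr 2
  ext1 t
  ext1 s
  rw [Pi.single_apply, Pi.neg_apply]

theorem dex_natCast {m : ℕ} (hm : m ≤ n) (t : Fin n) :
    dex n m t = if (t : ℕ) < m then 1 else 0 := by
  have ht := t.isLt
  rw [dex, ← eq_sub_iff_add_eq, Int.ediv_eq_iff_of_pos (by lia)]
  split_ifs <;> lia

theorem dex_add_one (i : Fin n) : dex n (i + 1) = dex n i + Pi.single i 1 := by
  ext t
  rw [Pi.add_apply, ← Nat.cast_add_one, dex_natCast (by lia), dex_natCast (by lia), Pi.single_apply]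
  split_ifs <;> lia

end Pap

open Pap in
theorem stmt12_general (R : Type*) [CommRing R] [Nontrivial R] {n : ℕ}
    (w : Equiv.Perm (Fin n)) (lam : Fin n → ℤ) {i : Fin n}
    (hstab : matLat R n (xMat R n w lam) (stdChain R n i) ≤ stdChain R n i) :
    (stdChain R n ((i : ℤ) + 1) =
        matLat R n (xMat R n w lam) (stdChain R n ((i : ℤ) + 1)) ⊔ stdChain R n (i : ℤ))
      ↔ (w i = i ∧ lam i = 0) := by
  have hsucc : -dex n (i + 1) = -dex n i - Pi.single i 1 := by
    rw [dex_add_one, neg_add']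
  have hshift : (lam + (-dex n i - Pi.single i 1)) ∘ w.symm =
      (lam + -dex n i) ∘ w.symm - Pi.single (w i) 1 := by
    ext s
    simp [Pi.single_apply, Equiv.symm_apply_eq, add_sub_assoc]
  simp only [stdChain_eq_coordLattice, matLat_xMat_coordLattice, coordLattice_le_iff] at hstab
  rw [stdChain_eq_coordLattice, stdChain_eq_coordLattice, hsucc, matLat_xMat_coordLattice, hshift,
    coordLattice_sup, coordLattice_inj, sub_single_eq_sub_single_inf_iff hstab]
  refine and_congr_right fun hw => ?_
  simp [hw, w.symm_apply_eq.2 hw.symm]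

open Pap in
/-- For `x = A_w u^λ` stabilizing the standard chain, `Λ̃_i = x Λ̃_i + Λ̃_{i-1}` iff
`w(i) = i` and `λ(i) = 0` (indices `i ∈ {1,…,n}`; here `i : Fin n` denotes the
`1`-indexed entry `i+1`). -/
theorem stmt12 (F : Type*) [Field F] (n : ℕ) (hn : 1 ≤ n)
    (w : Equiv.Perm (Fin n)) (lam : Fin n → ℤ)
    (hstab : ∀ j : ℤ, matLat F n (xMat F n w lam) (stdChain F n j) ≤ stdChain F n j) :
    ∀ i : Fin n,
      (stdChain F n ((i : ℤ) + 1) =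
          matLat F n (xMat F n w lam) (stdChain F n ((i : ℤ) + 1)) ⊔ stdChain F n (i : ℤ))
        ↔ (w i = i ∧ lam i = 0) := by
  exact fun _ => stmt12_general F w lam (hstab _)
end
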